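/- arXiv:math/9310213 — 3 statements merged into one kernel-verified Lean document; each statement's English description precedes it below -/
import Mathlib

section
/- (Padding coherence.) Let L be a first-order language, M a nonempty L-structure, U an ultrafilter on a nonempty set I, and r ≤ q natural numbers. For F : I^r → M let pad F : I^q → M be defined by (pad F)(i₁,…,i_q) = F(i₁,…,i_r). Then for every L-formula φ with n free variables and every tuple F₁, …, Fₙ : I^r → M, the ultraproduct of the constant family (fun _ => M) over I^r with respect to U^[r] realizes φ at [F₁], …, [Fₙ] if and only if the ultraproduct over I^q with respect to U^[q] realizes φ at [pad F₁], …, [pad Fₙ]. -/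
open FirstOrder Filter

/-- The iterated ultrafilter quantifier `U i_r, U i_{r-1}, …, U i_1, φ (i₁, …, i_r)`,
interpreted innermost-first. -/
def UIter {I : Type*} (U : Ultrafilter I) : (r : ℕ) → ((Fin r → I) → Prop) → Prop
  | 0, φ => φ (fun i => i.elim0)
  | r + 1, φ => {j : I | UIter U r (fun t => φ (Fin.snoc t j))} ∈ U

/-- Padding a function `F : I^r → M` to a function `I^q → M` (for `r ≤ q`) by ignoring the
extra coordinates: `(pad F)(i₁,…,i_q) = F(i₁,…,i_r)`. -/
def pad {I M : Type*} {r q : ℕ} (h : r ≤ q) (F : (Fin r → I) → M) : (Fin q → I) → M :=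
  fun t => F fun k => t (Fin.castLE h k)

theorem UIter_pad {I : Type*} (U : Ultrafilter I) {r q : ℕ} (h : r ≤ q)
    (P : (Fin r → I) → Prop) :
    UIter U q (fun t => P fun k => t (Fin.castLE h k)) ↔ UIter U r P := by
  induction q, h using Nat.le_induction with
  | base => exact Iff.rfl
  | succ q hq ih =>
    have e : ∀ (t : Fin q → I) (j : I),
        (fun k : Fin r => (Fin.snoc t j : Fin (q + 1) → I) (Fin.castLE (Nat.le_succ_of_le hq) k))
          = fun k => t (Fin.castLE hq k) := by
      intro t j
      funext k
      exact Fin.snoc_castSucc (α := fun _ => I) j t (Fin.castLE hq k)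
    simp only [UIter]
    have e2 : {j : I | UIter U q (fun t => P fun k : Fin r =>
        (Fin.snoc t j : Fin (q + 1) → I) (Fin.castLE (Nat.le_succ_of_le hq) k))}
          = {_j : I | UIter U r P} := by
      ext j
      simp only [e]
      exact ih
    rw [e2]
    exact Filter.eventually_const (f := (U : Filter I))

/-- **Padding coherence.** Let `M` be a nonempty `L`-structure, `U` an ultrafilter on a
nonempty set `I`, and `r ≤ q`.  Let `Vr = U^[r]` and `Vq = U^[q]` be the Fubini powers of `U`
(characterized by the iterated-quantifier membership condition).  Then for every `L`-formula
`φ` with `n` free variables and all `F₁, …, Fₙ : I^r → M`, the ultraproduct of the constant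
family over `I^r` with respect to `U^[r]` realizes `φ` at `[F₁], …, [Fₙ]` if and only if the
ultraproduct over `I^q` with respect to `U^[q]` realizes `φ` at `[pad F₁], …, [pad Fₙ]`. -/
theorem padding_coherence {L : FirstOrder.Language} {M : Type*} [L.Structure M]
    [Nonempty M] {I : Type*} [Nonempty I] (U : Ultrafilter I) {r q : ℕ} (h : r ≤ q)
    (Vr : Ultrafilter (Fin r → I))
    (hVr : ∀ A : Set (Fin r → I), A ∈ Vr ↔ UIter U r (· ∈ A))
    (Vq : Ultrafilter (Fin q → I))
    (hVq : ∀ A : Set (Fin q → I), A ∈ Vq ↔ UIter U q (· ∈ A))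
    {n : ℕ} (φ : L.Formula (Fin n)) (F : Fin n → (Fin r → I) → M) :
    (φ.Realize fun k => (F k : (Vr : Filter (Fin r → I)).Product fun _ => M)) ↔
      (φ.Realize fun k => (pad h (F k) : (Vq : Filter (Fin q → I)).Product fun _ => M)) := by
  have h1 := FirstOrder.Language.Ultraproduct.realize_formula_cast
    (M := fun _ : Fin r → I => M) (u := Vr) φ F
  have h2 := FirstOrder.Language.Ultraproduct.realize_formula_cast
    (M := fun _ : Fin q → I => M) (u := Vq) φ (fun k => pad h (F k))
  refine h1.trans (Iff.trans ?_ h2.symm)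
  refine (hVr _).trans (Iff.trans ?_ (hVq _).symm)
  exact (UIter_pad U h (fun t => φ.Realize fun k => F k t)).symm
end

section
/- (Idealization for fine ultrafilters.) Let α and β be types with β nonempty, let U be a fine ultrafilter on Finset α, and let φ : β → α → Prop be any binary relation. Then the following are equivalent: (1) for every finite subset A : Finset α there exists x : β such that φ x a holds for all a ∈ A; (2) there exists a function f : Finset α → β such that for every a : α, the set {i : Finset α | φ (f i) a} belongs to U. -/
/-- **Idealization for fine ultrafilters.** Let `β` be nonempty, let `U` be a fine
ultrafilter on `Finset α` (i.e. `{i | a ∈ i} ∈ U` for every `a : α`), and let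
`φ : β → α → Prop`.  Then: for every finite set `A : Finset α` there is an `x : β` with
`φ x a` for all `a ∈ A`, if and only if there is a function `f : Finset α → β` such that for
every `a : α` the set `{i : Finset α | φ (f i) a}` belongs to `U`. -/
theorem idealization_fine_ultrafilter {α β : Type*} [Nonempty β]
    (U : Ultrafilter (Finset α)) (hU : ∀ a : α, {i : Finset α | a ∈ i} ∈ U)
    (φ : β → α → Prop) :
    (∀ A : Finset α, ∃ x : β, ∀ a ∈ A, φ x a) ↔
      ∃ f : Finset α → β, ∀ a : α, {i : Finset α | φ (f i) a} ∈ U := by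
  constructor
  · intro h
    choose f hf using h
    exact ⟨f, fun a => Filter.mem_of_superset (hU a) (fun i hi => hf i a hi)⟩
  · rintro ⟨f, hf⟩ A
    have h : (⋂ a ∈ A, {i : Finset α | φ (f i) a}) ∈ (U : Filter (Finset α)) :=
      (Filter.biInter_finset_mem A).2 (fun a _ => hf a)
    obtain ⟨i, hi⟩ := U.nonempty_of_mem h
    exact ⟨f i, fun a ha => Set.mem_iInter₂.1 hi a ha⟩
end

section
/- (Definable existential witnesses.) Let L be a first-order language and M a nonempty L-structure admitting a binary relation W ⊆ M × M that well-orders M and whose graph is definable in M without parameters. Let A ⊆ M be a subset definable in M without parameters. Let φ be an L-formula with free variables x, y₁, …, yₙ, and let f₁, …, fₙ : A → M be functions whose graphs {(a, fₖ a) | a ∈ A} ⊆ M × M are definable in M with parameters. Then there exists a function g : A → M whose graph is definable in M with parameters such that for every a ∈ A, if there exists x : M with M realizing φ at (x, f₁ a, …, fₙ a), then M realizes φ at (g a, f₁ a, …, fₙ a). -/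
open FirstOrder

/-- **Definable existential witnesses.** Let `M` be a nonempty `L`-structure admitting a
binary relation `W` that well-orders `M` and whose graph is definable without parameters.
Let `A ⊆ M` be definable without parameters, let `φ` be an `L`-formula with free variables
`x, y₁, …, yₙ` (variable `0` playing the role of `x`), and let `f₁, …, fₙ : A → M` be
functions whose graphs are definable with parameters.  Then there is `g : A → M` with graph
definable with parameters such that for every `a ∈ A`, if some `x : M` satisfies
`φ (x, f₁ a, …, fₙ a)` in `M`, then `φ (g a, f₁ a, …, fₙ a)` holds in `M`. -/
theorem definable_existential_witness {L : FirstOrder.Language} {M : Type*}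
    [L.Structure M] [Nonempty M] (W : M → M → Prop) (hWO : IsWellOrder M W)
    (hWdef : (∅ : Set M).Definable L {v : Fin 2 → M | W (v 0) (v 1)})
    (A : Set M) (hA : (∅ : Set M).Definable₁ L A)
    {n : ℕ} (φ : L.Formula (Fin (n + 1))) (f : Fin n → A → M)
    (hf : ∀ k : Fin n, (Set.univ : Set M).Definable L
      {v : Fin 2 → M | ∃ h : v 0 ∈ A, f k ⟨v 0, h⟩ = v 1}) :
    ∃ g : A → M,
      (Set.univ : Set M).Definable L
        {v : Fin 2 → M | ∃ h : v 0 ∈ A, g ⟨v 0, h⟩ = v 1} ∧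
      ∀ a : A, (∃ x : M, φ.Realize (Fin.cons x fun k => f k a)) →
        φ.Realize (Fin.cons (g a) fun k => f k a) := by
  classical
  have m0 : M := Classical.arbitrary M
  have hW : (Set.univ : Set M).Definable L {v : Fin 2 → M | W (v 0) (v 1)} :=
    hWdef.mono (Set.empty_subset _)
  have hA' : (Set.univ : Set M).Definable L {v : Fin 1 → M | v 0 ∈ A} :=
    Set.Definable.mono hA (Set.empty_subset _)
  have hφ : (Set.univ : Set M).Definable L {v : Fin (n + 1) → M | φ.Realize v} :=
    (Set.empty_definable_iff.2 ⟨φ, rfl⟩).mono (Set.empty_subset _)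
  -- the relation "`a ∈ A` and `φ (x, f a)`"
  let R : M → M → Prop := fun a x => ∃ h : a ∈ A, φ.Realize (Fin.cons x fun k => f k ⟨a, h⟩)
  have hA2 : (Set.univ : Set M).Definable L {v : Fin 2 → M | v 0 ∈ A} :=
    hA'.preimage_comp (fun _ : Fin 1 => (0 : Fin 2))
  have hR : (Set.univ : Set M).Definable L {v : Fin 2 → M | R (v 0) (v 1)} := by
    have h1 : ∀ k : Fin n, (Set.univ : Set M).Definable L
        {w : Fin 2 ⊕ Fin n → M |
          ∃ h : w (Sum.inl 0) ∈ A, f k ⟨w (Sum.inl 0), h⟩ = w (Sum.inr k)} := fun k =>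
      (hf k).preimage_comp (![Sum.inl 0, Sum.inr k] : Fin 2 → Fin 2 ⊕ Fin n)
    have h2 : (Set.univ : Set M).Definable L
        {w : Fin 2 ⊕ Fin n → M |
          φ.Realize (w ∘ (Fin.cons (Sum.inl 1) Sum.inr : Fin (n + 1) → Fin 2 ⊕ Fin n))} :=
      hφ.preimage_comp (Fin.cons (Sum.inl 1) Sum.inr : Fin (n + 1) → Fin 2 ⊕ Fin n)
    have h3 := hA2.inter ((Set.definable_iInter_of_finite h1).inter h2).exists_of_finite
    convert! h3 using 1
    ext v
    have key : ∀ u : Fin n → M, (Sum.elim v u) ∘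
        (Fin.cons (Sum.inl 1) Sum.inr : Fin (n + 1) → Fin 2 ⊕ Fin n) = Fin.cons (v 1) u := by
      intro u
      funext i
      refine Fin.cases ?_ (fun j => ?_) i <;> simp
    simp only [Set.mem_inter_iff, Set.mem_iInter, Set.mem_setOf_eq, key, Sum.elim_inl,
      Sum.elim_inr, R]
    constructor
    · rintro ⟨h, hr⟩
      exact ⟨h, fun k => f k ⟨v 0, h⟩, fun k => ⟨h, rfl⟩, hr⟩
    · rintro ⟨h, u, hu, hr⟩
      refine ⟨h, ?_⟩
      have : (fun k => f k ⟨v 0, h⟩) = u := funext fun k => (hu k).2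
      rw [this]
      exact hr
  have hm0 : (Set.univ : Set M).Definable L {v : Fin 2 → M | v 1 = m0} :=
    Set.Definable.preimage_comp (fun _ : Fin 1 => (1 : Fin 2))
      (Set.Definable.singleton_of_mem L (Set.mem_univ m0))
  have hRu : (Set.univ : Set M).Definable L
      {w : Fin 2 ⊕ Fin 1 → M | R (w (Sum.inl 0)) (w (Sum.inr 0))} :=
    hR.preimage_comp (![Sum.inl 0, Sum.inr 0] : Fin 2 → Fin 2 ⊕ Fin 1)
  have hWu : (Set.univ : Set M).Definable L
      {w : Fin 2 ⊕ Fin 1 → M | W (w (Sum.inr 0)) (w (Sum.inl 1))} :=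
    hW.preimage_comp (![Sum.inr 0, Sum.inl 1] : Fin 2 → Fin 2 ⊕ Fin 1)
  have hdef := hA2.inter ((hR.inter (hRu.inter hWu).compl.forall_of_finite).union
    (hRu.compl.forall_of_finite.inter hm0))
  have hwf : WellFounded W := hWO.wf
  have hex : ∀ a : M, ∃ x : M, (R a x ∧ ∀ y, R a y → ¬ W y x) ∨ ((∀ y, ¬ R a y) ∧ x = m0) := by
    intro a
    by_cases h : ∃ y, R a y
    · obtain ⟨x, hx, hmin⟩ := hwf.has_min {y | R a y} h
      exact ⟨x, Or.inl ⟨hx, hmin⟩⟩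
    · exact ⟨m0, Or.inr ⟨fun y hy => h ⟨y, hy⟩, rfl⟩⟩
  choose g hg using hex
  have huniq : ∀ a x : M,
      ((R a x ∧ ∀ y, R a y → ¬ W y x) ∨ ((∀ y, ¬ R a y) ∧ x = m0)) → g a = x := by
    intro a x hx
    rcases hg a with ⟨h1, h2⟩ | ⟨h1, h2⟩ <;> rcases hx with ⟨h3, h4⟩ | ⟨h3, h4⟩
    · exact hWO.toTrichotomous.trichotomous _ _ (h4 _ h1) (h2 _ h3)
    · exact absurd h1 (h3 _)
    · exact absurd h3 (h1 _)
    · rw [h2, h4]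
  refine ⟨fun a => g a, ?_, ?_⟩
  · convert! hdef using 1
    ext v
    simp only [Set.mem_inter_iff, Set.mem_union, Set.mem_compl_iff, Set.mem_setOf_eq,
      Sum.elim_inl, Sum.elim_inr, exists_prop]
    refine and_congr_right fun _ => ?_
    constructor
    · intro h
      rw [← h]
      rcases hg (v 0) with ⟨h1, h2⟩ | ⟨h1, h2⟩
      · exact Or.inl ⟨h1, fun u hu => h2 _ hu.1 hu.2⟩
      · exact Or.inr ⟨fun u => h1 _, h2⟩
    · rintro (⟨h1, h2⟩ | ⟨h1, h2⟩)
      · exact huniq _ _ (Or.inl ⟨h1, fun y hy hw => h2 (fun _ => y) ⟨hy, hw⟩⟩)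
      · exact huniq _ _ (Or.inr ⟨fun y => h1 (fun _ => y), h2⟩)
  · rintro a ⟨x, hx⟩
    rcases hg a with ⟨⟨_, h1⟩, _⟩ | ⟨h1, _⟩
    · exact h1
    · exact absurd ⟨a.2, hx⟩ (h1 x)
end
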